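/- arXiv:1704.01747 — 2 statements merged into one kernel-verified Lean document; each statement's English description precedes it below -/
import Mathlib

section
/- For the pressure law p(ρ) = ρ^γ with γ ≥ 1 and internal energy ε(ρ) = ρ^(γ-1)/(γ-1) when γ > 1 (so that p(r) = r^2 ε'(r)), for any two distinct positive reals r ≠ s the quantity P(r,s) := p(r) + p(s) - 2·r·s·(ε(r) - ε(s))/(r - s) is strictly positive. -/
open Real

lemma aux_deriv (a : ℝ) (ha : 0 < a) (x : ℝ) (hx : 1 < x) :
    0 < (1 * x ^ a + x * (a * x ^ (a - 1))) - a * x ^ (a - 1) + (x ^ 2)⁻¹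
      - 2 * (a * x ^ (a - 1)) / a := by
  have hx0 : 0 < x := by linarith
  have hi : x⁻¹ < 1 := inv_lt_one_of_one_lt₀ hx
  have hip : 0 < x⁻¹ := inv_pos.mpr hx0
  have hb := one_add_mul_self_lt_rpow_one_add (s := x⁻¹ - 1) (by linarith) (by linarith)
    (p := a + 2) (by linarith)
  rw [show 1 + (x⁻¹ - 1) = x⁻¹ by ring, Real.inv_rpow hx0.le, Real.rpow_add hx0,
    Real.rpow_two] at hb
  have hp : 0 < x ^ a := Real.rpow_pos_of_pos hx0 a
  rw [Real.rpow_sub_one hx0.ne']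
  have h2 := mul_lt_mul_of_pos_left hb hp
  have e : x ^ a * (x ^ a * x ^ 2)⁻¹ = (x ^ 2)⁻¹ := by field_simp
  rw [e] at h2
  have e2 : (1 * x ^ a + x * (a * (x ^ a / x))) - a * (x ^ a / x) + (x ^ 2)⁻¹
      - 2 * (a * (x ^ a / x)) / a = (x ^ 2)⁻¹ - x ^ a * (1 + (a + 2) * (x⁻¹ - 1)) := by
    field_simp
    ring
  rw [e2]
  linarith

lemma aux_g (a : ℝ) (ha : 0 < a) (x : ℝ) (hx : 1 < x) :
    0 < x * x ^ a - x ^ a - x⁻¹ + 1 - 2 * (x ^ a - 1) / a := by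
  have hd : ∀ y : ℝ, 1 ≤ y → HasDerivAt
      (fun x : ℝ => x * x ^ a - x ^ a - x⁻¹ + 1 - 2 * (x ^ a - 1) / a)
      ((1 * y ^ a + y * (a * y ^ (a - 1))) - a * y ^ (a - 1) + (y ^ 2)⁻¹
      - 2 * (a * y ^ (a - 1)) / a) y := by
    intro y hy
    have hy0 : y ≠ 0 := by positivity
    have h1 := Real.hasDerivAt_rpow_const (x := y) (p := a) (Or.inl hy0)
    have h := (((((hasDerivAt_id y).mul h1).sub h1).sub (hasDerivAt_inv hy0)).add_const 1).sub
      (((h1.sub_const 1).const_mul 2).div_const a)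
    rw [sub_neg_eq_add] at h
    exact h
  have hm : StrictMonoOn (fun x : ℝ => x * x ^ a - x ^ a - x⁻¹ + 1 - 2 * (x ^ a - 1) / a)
      (Set.Ici 1) := by
    apply strictMonoOn_of_deriv_pos (convex_Ici 1)
    · intro y hy
      exact (hd y hy).continuousAt.continuousWithinAt
    · intro y hy
      rw [interior_Ici] at hy
      rw [(hd y (le_of_lt hy)).deriv]
      exact aux_deriv a ha y hy
  have := hm (Set.mem_Ici.mpr le_rfl) (Set.mem_Ici.mpr hx.le) hx
  simpa using this

lemma aux_lt (γ : ℝ) (hγ : 1 < γ) (r s : ℝ) (hs : 0 < s) (hrs : s < r) :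
    r ^ γ + s ^ γ - 2 * r * s * ((r ^ (γ - 1) / (γ - 1) - s ^ (γ - 1) / (γ - 1)) / (r - s)) > 0 := by
  obtain ⟨a, rfl⟩ : ∃ a, γ = a + 1 := ⟨γ - 1, by ring⟩
  have ha : 0 < a := by linarith
  obtain ⟨x, rfl⟩ : ∃ x, r = x * s := ⟨r / s, by field_simp⟩
  have hx : 1 < x := by
    by_contra h
    nlinarith
  have hx0 : 0 < x := by linarith
  have hx1 : 0 < x - 1 := by linarith
  have hg := aux_g a ha x hx
  rw [add_sub_cancel_right, Real.rpow_add_one (by positivity), Real.rpow_add_one (by positivity),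
    Real.mul_rpow hx0.le hs.le]
  have hp : 0 < s ^ a := Real.rpow_pos_of_pos hs a
  have e : x ^ a * s ^ a * (x * s) + s ^ a * s - 2 * (x * s) * s *
      ((x ^ a * s ^ a / a - s ^ a / a) / (x * s - s)) =
      s ^ a * s * x / (x - 1) * (x * x ^ a - x ^ a - x⁻¹ + 1 - 2 * (x ^ a - 1) / a) := by
    rw [show x * s - s = (x - 1) * s by ring]
    field_simp
    ring
  rw [e]
  positivity

theorem P_pos (γ : ℝ) (hγ : 1 < γ) (r s : ℝ) (hr : 0 < r) (hs : 0 < s) (hrs : r ≠ s) :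
    r ^ γ + s ^ γ - 2 * r * s * ((r ^ (γ - 1) / (γ - 1) - s ^ (γ - 1) / (γ - 1)) / (r - s)) > 0 := by
  rcases lt_or_gt_of_ne hrs with h | h
  · have := aux_lt γ hγ s r hr h
    rw [← neg_div_neg_eq, neg_sub, neg_sub]
    linarith
  · exact aux_lt γ hγ r s hs h
end

section
/- Let p be a C² function with p' > 0 and p'' ≥ 0 on (0,∞), let 0 < ρ₋ < ρ₊ and K, L > 0, and set ρ̃ = (K²ρ₊ + L²ρ₋)/(K²+L²). Then the function ε̃₁(ρ₁) := p(ρ₊) − p(ρ₁) − ρ₊·(L√(1 − ρ₋/ρ₁) − K√(ρ₊/ρ₁ − 1))² is concave on the interval (ρ₋, ρ̃). -/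
open Real

lemma hd_congr {f g : ℝ → ℝ} {f' g' x : ℝ} (h : HasDerivAt f f' x) (hfg : ∀ y, g y = f y)
    (hd : g' = f') : HasDerivAt g g' x := by
  have : g = f := funext hfg
  rw [this, hd]
  exact h

lemma key_ineq (K L r u v : ℝ) (hL : 0 < L) (hr : 0 < r) (hu : 0 < u) (hv : 0 < v)
    (h : L * v ≤ K * u) :
    0 ≤ 2 * (K ^ 2 * (r * (1 + u ^ 2)) - L ^ 2 * (r * (1 - v ^ 2))) / r ^ 3
      - 2 * K * L * ((-6 * ((r * (1 - v ^ 2)) * (r * (1 + u ^ 2))) / r ^ 4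
          + 2 * (r * (1 - v ^ 2) + r * (1 + u ^ 2)) / r ^ 3) / (2 * (u * v))
        - (2 * ((r * (1 - v ^ 2)) * (r * (1 + u ^ 2))) / r ^ 3
          - (r * (1 - v ^ 2) + r * (1 + u ^ 2)) / r ^ 2) ^ 2 / (4 * (u * v) ^ 3)) := by
  obtain ⟨W, hW⟩ : ∃ W, W = K * u - L * v := ⟨_, rfl⟩
  have hW0 : 0 ≤ W := by linarith
  have hK : K = (L * v + W) / u := by field_simp; linarith
  have : 2 * (K ^ 2 * (r * (1 + u ^ 2)) - L ^ 2 * (r * (1 - v ^ 2))) / r ^ 3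
      - 2 * K * L * ((-6 * ((r * (1 - v ^ 2)) * (r * (1 + u ^ 2))) / r ^ 4
          + 2 * (r * (1 - v ^ 2) + r * (1 + u ^ 2)) / r ^ 3) / (2 * (u * v))
        - (2 * ((r * (1 - v ^ 2)) * (r * (1 + u ^ 2))) / r ^ 3
          - (r * (1 - v ^ 2) + r * (1 + u ^ 2)) / r ^ 2) ^ 2 / (4 * (u * v) ^ 3))
      = 2 / r ^ 2 * (L ^ 2 * (u ^ 2 + v ^ 2) ^ 2 / (4 * u ^ 4 * v ^ 2)
        + W / u * L * (v / u + u / v + (u ^ 2 + v ^ 2) ^ 2 / (4 * u ^ 3 * v ^ 3))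
        + W ^ 2 / u ^ 2 * (1 + u ^ 2)) := by
    rw [hK]
    field_simp
    ring
  rw [this]
  positivity

lemma p_convex (p : ℝ → ℝ) (hp : ContDiffOn ℝ 2 p (Set.Ioi 0))
    (hp'' : ∀ r > 0, 0 ≤ deriv (deriv p) r) : ConvexOn ℝ (Set.Ioi 0) p := by
  have h1 : DifferentiableOn ℝ (deriv p) (Set.Ioi 0) :=
    (hp.deriv_of_isOpen (m := 1) isOpen_Ioi (by norm_num)).differentiableOn (by norm_num)
  refine convexOn_of_deriv2_nonneg (convex_Ioi 0) hp.continuousOn ?_ ?_ ?_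
  · rw [interior_Ioi]; exact hp.differentiableOn (by norm_num)
  · rw [interior_Ioi]; exact h1
  · rw [interior_Ioi]; intro x hx; exact hp'' x hx

lemma g_convex (a b K L : ℝ) (ha : 0 < a) (hab : a < b) (hK : 0 < K) (hL : 0 < L) :
    ConvexOn ℝ (Set.Ioo a ((K ^ 2 * b + L ^ 2 * a) / (K ^ 2 + L ^ 2)))
      (fun r => K ^ 2 * (b / r - 1) + L ^ 2 * (1 - a / r)
        - 2 * K * L * √((b / r - 1) * (1 - a / r))) := by
  have hbd : ∀ r ∈ Set.Ioo a ((K ^ 2 * b + L ^ 2 * a) / (K ^ 2 + L ^ 2)),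
      0 < r ∧ 0 < b / r - 1 ∧ 0 < 1 - a / r ∧
        L ^ 2 * (1 - a / r) ≤ K ^ 2 * (b / r - 1) := by
    rintro r ⟨h1, h2⟩
    have hr : 0 < r := ha.trans h1
    rw [lt_div_iff₀ (by positivity)] at h2
    have hrb : r < b := by
      by_contra! hc
      nlinarith [mul_pos hL hL, mul_pos hK hK]
    refine ⟨hr, ?_, ?_, ?_⟩
    · rw [sub_pos, lt_div_iff₀ hr]; linarith
    · rw [sub_pos, div_lt_iff₀ hr]; linarith
    · have e1 : b / r - 1 = (b - r) / r := by field_simp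
      have e2 : 1 - a / r = (r - a) / r := by field_simp
      rw [e1, e2, ← mul_div_assoc, ← mul_div_assoc]
      gcongr ?_ / _
      nlinarith
  have hQ : ∀ r : ℝ, 0 < r → HasDerivAt (fun r => (b / r - 1) * (1 - a / r))
      (2 * (a * b) / r ^ 3 - (a + b) / r ^ 2) r := by
    intro r hr
    have hi := hasDerivAt_inv hr.ne'
    have := ((hi.const_mul b).sub_const 1).mul ((hi.const_mul a).const_sub 1)
    refine hd_congr (this) ?_ ?_
    · intro x; simp [div_eq_mul_inv]
    field_simp
    ring
  have hQ2 : ∀ r : ℝ, 0 < r → HasDerivAt (fun r => 2 * (a * b) / r ^ 3 - (a + b) / r ^ 2)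
      (-6 * (a * b) / r ^ 4 + 2 * (a + b) / r ^ 3) r := by
    intro r hr
    have h3 := ((hasDerivAt_pow 3 r).fun_inv (by positivity)).const_mul (2 * (a * b))
    have h2 := ((hasDerivAt_pow 2 r).fun_inv (by positivity)).const_mul (a + b)
    refine hd_congr (h3.sub h2) ?_ ?_
    · intro x; simp [div_eq_mul_inv]
    field_simp
    ring
  have hg1 : ∀ r ∈ Set.Ioo a ((K ^ 2 * b + L ^ 2 * a) / (K ^ 2 + L ^ 2)),
      HasDerivAt (fun r => K ^ 2 * (b / r - 1) + L ^ 2 * (1 - a / r)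
        - 2 * K * L * √((b / r - 1) * (1 - a / r)))
        (-(K ^ 2 * b - L ^ 2 * a) / r ^ 2 - 2 * K * L *
          ((2 * (a * b) / r ^ 3 - (a + b) / r ^ 2) / (2 * √((b / r - 1) * (1 - a / r))))) r := by
    intro r hr
    obtain ⟨h0, h1, h2, h3⟩ := hbd r hr
    have hi := hasDerivAt_inv h0.ne'
    have hA := (((hi.const_mul b).sub_const 1).const_mul (K ^ 2)).add
      (((hi.const_mul a).const_sub 1).const_mul (L ^ 2))
    have hs := ((hQ r h0).sqrt (mul_pos h1 h2).ne').const_mul (2 * K * L)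
    refine hd_congr (hA.sub hs) ?_ ?_
    · intro x; simp [div_eq_mul_inv]
    field_simp
    ring
  have hg2 : ∀ r ∈ Set.Ioo a ((K ^ 2 * b + L ^ 2 * a) / (K ^ 2 + L ^ 2)),
      HasDerivAt (fun r => -(K ^ 2 * b - L ^ 2 * a) / r ^ 2 - 2 * K * L *
          ((2 * (a * b) / r ^ 3 - (a + b) / r ^ 2) / (2 * √((b / r - 1) * (1 - a / r)))))
        (2 * (K ^ 2 * b - L ^ 2 * a) / r ^ 3 - 2 * K * L *
          ((-6 * (a * b) / r ^ 4 + 2 * (a + b) / r ^ 3) / (2 * √((b / r - 1) * (1 - a / r)))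
          - (2 * (a * b) / r ^ 3 - (a + b) / r ^ 2) ^ 2
            / (4 * √((b / r - 1) * (1 - a / r)) ^ 3))) r := by
    intro r hr
    obtain ⟨h0, h1, h2, h3⟩ := hbd r hr
    have hspos : 0 < √((b / r - 1) * (1 - a / r)) := Real.sqrt_pos.2 (mul_pos h1 h2)
    have hA := ((hasDerivAt_pow 2 r).fun_inv (by positivity)).const_mul
      (-(K ^ 2 * b - L ^ 2 * a))
    have hs := ((hQ r h0).sqrt (mul_pos h1 h2).ne').const_mul 2
    have hd := ((hQ2 r h0).fun_div hs (by positivity)).const_mul (2 * K * L)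
    refine hd_congr (hA.sub hd) ?_ ?_
    · intro x; simp [div_eq_mul_inv]
    generalize √((b / r - 1) * (1 - a / r)) = s at *
    generalize 2 * (a * b) / r ^ 3 - (a + b) / r ^ 2 = Q1 at *
    generalize -6 * (a * b) / r ^ 4 + 2 * (a + b) / r ^ 3 = Q2 at *
    field_simp
    ring
  refine convexOn_of_hasDerivWithinAt2_nonneg (convex_Ioo _ _)
    (fun r hr => (hg1 r hr).continuousAt.continuousWithinAt)
    (fun r hr => (hg1 r (interior_subset hr)).hasDerivWithinAt)
    (fun r hr => (hg2 r (interior_subset hr)).hasDerivWithinAt) ?_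
  intro r hr
  obtain ⟨h0, h1, h2, h3⟩ := hbd r (interior_subset hr)
  have hu := Real.sqrt_pos.2 h1
  have hv := Real.sqrt_pos.2 h2
  have hu2 := Real.sq_sqrt h1.le
  have hv2 := Real.sq_sqrt h2.le
  rw [Real.sqrt_mul h1.le]
  generalize √(b / r - 1) = u at *
  generalize √(1 - a / r) = v at *
  have hb : b = r * (1 + u ^ 2) := by rw [hu2]; field_simp; ring
  have ha' : a = r * (1 - v ^ 2) := by rw [hv2]; field_simp; ring
  have hle : L * v ≤ K * u := by
    rw [← hu2, ← hv2] at h3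
    refine le_of_sq_le_sq ?_ (by positivity)
    nlinarith
  have := key_ineq K L r u v hL h0 hu hv hle
  rw [← hb, ← ha'] at this
  exact this

theorem eps_tilde_concave (p : ℝ → ℝ) (hp : ContDiffOn ℝ 2 p (Set.Ioi 0))
    (hp' : ∀ r > 0, 0 < deriv p r) (hp'' : ∀ r > 0, 0 ≤ deriv (deriv p) r)
    (ρm ρp K L : ℝ) (hρm : 0 < ρm) (hρp : ρm < ρp) (hK : 0 < K) (hL : 0 < L) :
    ConcaveOn ℝ (Set.Ioo ρm ((K ^ 2 * ρp + L ^ 2 * ρm) / (K ^ 2 + L ^ 2)))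
      (fun ρ₁ => p ρp - p ρ₁ -
        ρp * (L * Real.sqrt (1 - ρm / ρ₁) - K * Real.sqrt (ρp / ρ₁ - 1)) ^ 2) := by
  have hg := (g_convex ρm ρp K L hρm hρp hK hL).smul (hρm.trans hρp).le
  have hpc := (p_convex p hp hp'').subset
    (fun x hx => hρm.trans hx.1 :
      Set.Ioo ρm ((K ^ 2 * ρp + L ^ 2 * ρm) / (K ^ 2 + L ^ 2)) ⊆ Set.Ioi 0) (convex_Ioo _ _)
  have hc := ((concaveOn_const (p ρp) (convex_Ioo _ _)).sub hpc).sub hg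
  refine hc.congr ?_
  rintro r ⟨h1, h2⟩
  have hr : 0 < r := hρm.trans h1
  rw [lt_div_iff₀ (by positivity)] at h2
  have hrb : r < ρp := by
    by_contra! hc
    nlinarith [mul_pos hL hL, mul_pos hK hK]
  have e1 : 0 ≤ ρp / r - 1 := by rw [sub_nonneg, le_div_iff₀ hr]; linarith
  have e2 : 0 ≤ 1 - ρm / r := by rw [sub_nonneg, div_le_iff₀ hr]; linarith
  simp only [Pi.sub_apply, smul_eq_mul]
  rw [Real.sqrt_mul e1]
  have hu2 := Real.sq_sqrt e1
  have hv2 := Real.sq_sqrt e2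
  generalize √(ρp / r - 1) = u at *
  generalize √(1 - ρm / r) = v at *
  rw [← hu2, ← hv2]
  ring
end
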